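/- If DC holds and L_3 is finite, then L_k < L_{k+1} for every integer k ≥ 3. -/

import Mathlib

open Filter Topology
open scoped ENNReal

/-- `N` has the Ramsey property for the tuple `k`: every `r`-coloring of the
edges of the complete graph on `N` vertices admits a color `i` and a set of
`k i` vertices all of whose connecting edges have color `i`. -/
def ramseyProp {r : ℕ} (k : Fin r → ℕ) (N : ℕ) : Prop :=
  ∀ c : Sym2 (Fin N) → Fin r, ∃ i : Fin r, ∃ S : Finset (Fin N),
    S.card = k i ∧ ∀ u ∈ S, ∀ v ∈ S, u ≠ v → c s(u, v) = i

/-- The multicolor Ramsey number `R(k 0, …, k (r-1))`: the least positive `N`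
with the Ramsey property. -/
noncomputable def multiRamsey {r : ℕ} (k : Fin r → ℕ) : ℕ :=
  sInf {N | 0 < N ∧ ramseyProp k N}

/-- The diagonal multicolor Ramsey number `R_r(k)`. -/
noncomputable def diagRamsey (r k : ℕ) : ℕ :=
  multiRamsey (fun _ : Fin r => k)

/-- DC, the "decreasing conjecture". -/
def DC : Prop :=
  ∀ (r : ℕ), 2 ≤ r → ∀ k : Fin r → ℕ, (∀ l, 2 ≤ k l) →
    ∀ i j : Fin r, i ≠ j → 3 ≤ k i → k i ≤ k j →
      multiRamsey (fun l => if l = i then k i - 1 else if l = j then k j + 1 else k l)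
        ≤ multiRamsey k

/-!
Under DC the diagonal sequence is log-concave in the limit: from `2a` entries equal to `k + 1`, move
one unit across each of `a` disjoint pairs to get `a` entries `k` and `a` entries `k + 2`; the
lexicographic product of extremal colorings bounds the latter Ramsey number below, so
`(R_a(k) - 1) (R_a(k + 2) - 1) < R_{2a}(k + 1)` and `L_k L_{k+2} ≤ L_{k+1} ^ 2`. Starting from
`L_3 < ∞`, log-concavity propagates finiteness upwards. A log-concave sequence that once fails to
increase never increases again, whereas `L_k ≥ k - 1` is unbounded.
-/

section ColorGraph

variable {V W ι κ : Type*}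

/-- The graph of the pairs of distinct vertices that receive color `i`. Values of the coloring on
loops are ignored. -/
def colorGraph (c : Sym2 V → ι) (i : ι) : SimpleGraph V :=
  SimpleGraph.fromEdgeSet (c ⁻¹' {i})

@[simp]
theorem colorGraph_adj {c : Sym2 V → ι} {i : ι} {u v : V} :
    (colorGraph c i).Adj u v ↔ c s(u, v) = i ∧ u ≠ v := by
  simp [colorGraph]

theorem iSup_colorGraph (c : Sym2 V → ι) : ⨆ i, colorGraph c i = ⊤ := by
  ext u v
  simp

theorem cliqueFree_of_hom {G : SimpleGraph V} {H : SimpleGraph W} (f : G →g H) {n : ℕ}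
    (h : H.CliqueFree n) : G.CliqueFree n := by
  rw [SimpleGraph.cliqueFree_iff] at h ⊢
  exact ⟨fun K => h.false ⟨f.comp K.toHom, (f.comp K.toHom).injective_of_top_hom⟩⟩

/-- The lexicographic product of two edge colorings with disjoint color sets: pairs in different
rows are colored by `c`, pairs in the same row by `d`. -/
def lexColoring [DecidableEq V] (c : Sym2 V → ι) (d : Sym2 W → κ) : Sym2 (V × W) → ι ⊕ κ :=
  Sym2.lift ⟨fun x y => if x.1 = y.1 then .inr (d s(x.2, y.2)) else .inl (c s(x.1, y.1)),
    fun x y => by simp only [eq_comm (a := x.1), Sym2.eq_swap (a := x.1), Sym2.eq_swap (a := x.2)]⟩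

theorem lexColoring_eq_inl_iff [DecidableEq V] {c : Sym2 V → ι} {d : Sym2 W → κ}
    {x y : V × W} {i : ι} :
    lexColoring c d s(x, y) = .inl i ↔ x.1 ≠ y.1 ∧ c s(x.1, y.1) = i := by
  by_cases h : x.1 = y.1 <;> simp [lexColoring, h]

theorem lexColoring_eq_inr_iff [DecidableEq V] {c : Sym2 V → ι} {d : Sym2 W → κ}
    {x y : V × W} {j : κ} :
    lexColoring c d s(x, y) = .inr j ↔ x.1 = y.1 ∧ d s(x.2, y.2) = j := by
  by_cases h : x.1 = y.1 <;> simp [lexColoring, h]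

theorem cliqueFree_colorGraph_lexColoring [DecidableEq V] {c : Sym2 V → ι} {d : Sym2 W → κ}
    {k : ι → ℕ} {l : κ → ℕ}
    (hc : ∀ i, (colorGraph c i).CliqueFree (k i)) (hd : ∀ j, (colorGraph d j).CliqueFree (l j)) :
    ∀ a, (colorGraph (lexColoring c d) a).CliqueFree (Sum.elim k l a)
  | .inl i => by
    refine cliqueFree_of_hom ⟨Prod.fst, fun {x y} hxy => ?_⟩ (hc i)
    obtain ⟨hne, hcol⟩ := lexColoring_eq_inl_iff.mp (colorGraph_adj.mp hxy).1
    exact colorGraph_adj.mpr ⟨hcol, hne⟩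
  | .inr j => by
    refine cliqueFree_of_hom ⟨Prod.snd, fun {x y} hxy => ?_⟩ (hd j)
    obtain ⟨hcol, hne⟩ := colorGraph_adj.mp hxy
    obtain ⟨hfst, hcol⟩ := lexColoring_eq_inr_iff.mp hcol
    exact colorGraph_adj.mpr ⟨hcol, fun hsnd => hne (Prod.ext hfst hsnd)⟩

end ColorGraph

section FiniteRamsey

variable {V ι : Type*} {G : ι → SimpleGraph V} {k : ι → ℕ}

theorem cliqueFreeOn_update_inter_neighborSet [DecidableEq ι] {A : Set V}
    (h : ∀ j, (G j).CliqueFreeOn A (k j)) {i : ι} (hi : k i ≠ 0) {v : V} (hv : v ∈ A) (j : ι) :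
    (G j).CliqueFreeOn (A ∩ (G i).neighborSet v) (Function.update k i (k i - 1) j) := by
  obtain rfl | hj := eq_or_ne j i
  · rw [Function.update_self]
    refine SimpleGraph.CliqueFreeOn.of_succ _ ?_ hv
    rw [Nat.sub_add_cancel (Nat.pos_of_ne_zero hi)]
    exact h j
  · rw [Function.update_of_ne hj]
    exact SimpleGraph.CliqueFreeOn.subset _ Set.inter_subset_left (h j)

theorem card_le_one_add_sum_card_neighbors [Fintype ι] [∀ i, DecidableRel (G i).Adj]
    (hG : ⨆ i, G i = ⊤) (A : Finset V) (v : V) :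
    A.card ≤ 1 + ∑ i, (A.filter ((G i).Adj v)).card := by
  classical
  have hcover : A ⊆ {v} ∪ Finset.univ.biUnion fun i => A.filter ((G i).Adj v) := by
    intro u hu
    obtain rfl | huv := eq_or_ne v u
    · simp
    · have hadj : (⨆ i, G i).Adj v u := by rwa [hG, SimpleGraph.top_adj]
      obtain ⟨i, hi⟩ := SimpleGraph.iSup_adj.mp hadj
      exact Finset.mem_union_right _ (Finset.mem_biUnion.mpr
        ⟨i, Finset.mem_univ i, Finset.mem_filter.mpr ⟨hu, hi⟩⟩)
  calc A.card ≤ _ := Finset.card_le_card hcover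
    _ ≤ _ := Finset.card_union_le _ _
    _ ≤ _ := Nat.add_le_add (Finset.card_singleton v).le Finset.card_biUnion_le

theorem exists_forall_card_lt_of_cliqueFreeOn [Finite ι] (k : ι → ℕ) :
    ∃ N, ∀ (V : Type*) (G : ι → SimpleGraph V), ⨆ i, G i = ⊤ → ∀ A : Finset V,
      (∀ i, (G i).CliqueFreeOn A (k i)) → A.card < N := by
  classical
  have := Fintype.ofFinite ι
  induction k using WellFoundedLT.induction with
  | ind k ih =>
    by_cases h0 : ∃ i, k i = 0
    · obtain ⟨i, hi⟩ := h0
      exact ⟨0, fun V G _ A hA => (hA i (t := ∅) (by simp) (by simp [hi])).elim⟩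
    push Not at h0
    have hlt (i : ι) : Function.update k i (k i - 1) < k :=
      update_lt_self_iff.mpr (Nat.pred_lt (h0 i))
    choose N hN using fun i => ih _ (hlt i)
    refine ⟨∑ i, N i + 2, fun V G hG A hA => ?_⟩
    obtain rfl | ⟨v, hv⟩ := A.eq_empty_or_nonempty
    · simp
    have hnbr (i : ι) : (A.filter ((G i).Adj v)).card ≤ N i := by
      refine (hN i V G hG _ fun j => ?_).le
      rw [Finset.coe_filter]
      exact cliqueFreeOn_update_inter_neighborSet hA (h0 i) hv j
    have hcard := card_le_one_add_sum_card_neighbors hG A v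
    have hsum : ∑ i, (A.filter ((G i).Adj v)).card ≤ ∑ i, N i :=
      Finset.sum_le_sum fun i _ => hnbr i
    omega

end FiniteRamsey

section FinAppend

variable {α : Type*} {r s : ℕ}

theorem append_const (x : α) :
    Fin.append (fun _ : Fin r => x) (fun _ : Fin s => x) = fun _ => x := by
  funext i
  cases i using Fin.addCases <;> simp

theorem castAdd_ne_natAdd (i : Fin r) (j : Fin s) : Fin.castAdd s i ≠ Fin.natAdd r j :=
  finSumFinEquiv.injective.ne Sum.inl_ne_inr

theorem append_update_update (u : Fin r → α) (v : Fin s → α) (i : Fin r)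
    (j : Fin s) (x y : α) :
    Fin.append (Function.update u i x) (Function.update v j y) =
      Function.update (Function.update (Fin.append u v) (Fin.natAdd r j) y)
        (Fin.castAdd s i) x := by
  funext l
  cases l using Fin.addCases <;>
    simp [Function.update_apply, castAdd_ne_natAdd, (castAdd_ne_natAdd _ _).symm]

end FinAppend

section RamseyNumber

variable {r s : ℕ} {k : Fin r → ℕ} {l : Fin s → ℕ} {M N : ℕ}

theorem ramseyProp_iff :
    ramseyProp k N ↔ ∀ c : Sym2 (Fin N) → Fin r, ∃ i, ¬(colorGraph c i).CliqueFree (k i) := by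
  have hclique (c : Sym2 (Fin N) → Fin r) (i : Fin r) (S : Finset (Fin N)) :
      (colorGraph c i).IsNClique (k i) S ↔
        S.card = k i ∧ ∀ u ∈ S, ∀ v ∈ S, u ≠ v → c s(u, v) = i := by
    rw [SimpleGraph.isNClique_iff, SimpleGraph.isClique_iff, and_comm]
    simp +contextual [Set.Pairwise]
  simp only [ramseyProp, SimpleGraph.CliqueFree, not_forall, not_not, hclique]

theorem not_ramseyProp_iff :
    ¬ramseyProp k N ↔ ∃ c : Sym2 (Fin N) → Fin r, ∀ i, (colorGraph c i).CliqueFree (k i) := by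
  simp [ramseyProp_iff]

theorem not_ramseyProp_of_cliqueFree {V ι : Type*} (f : Fin N ↪ V) (e : ι ≃ Fin r) (c : Sym2 V → ι)
    (h : ∀ i, (colorGraph c i).CliqueFree (k (e i))) : ¬ramseyProp k N := by
  refine not_ramseyProp_iff.mpr ⟨fun p => e (c (p.map f)), fun j => ?_⟩
  obtain ⟨i, rfl⟩ := e.surjective j
  exact cliqueFree_of_hom ⟨f, by simp⟩ (h i)

theorem ramseyProp_mono (hMN : M ≤ N) (h : ramseyProp k M) : ramseyProp k N := by
  contrapose h
  obtain ⟨c, hc⟩ := not_ramseyProp_iff.mp h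
  exact not_ramseyProp_of_cliqueFree (Fin.castLEEmb hMN) (Equiv.refl _) c hc

theorem not_ramseyProp_of_forall_lt [NeZero r] (h : ∀ i, N < k i) : ¬ramseyProp k N :=
  not_ramseyProp_iff.mpr
    ⟨fun _ => 0, fun i => SimpleGraph.cliqueFree_of_card_lt ((Fintype.card_fin N).trans_lt (h i))⟩

theorem not_ramseyProp_append (hk : ¬ramseyProp k M) (hl : ¬ramseyProp l N) :
    ¬ramseyProp (Fin.append k l) (M * N) := by
  obtain ⟨c, hc⟩ := not_ramseyProp_iff.mp hk
  obtain ⟨d, hd⟩ := not_ramseyProp_iff.mp hl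
  refine not_ramseyProp_of_cliqueFree finProdFinEquiv.symm.toEmbedding finSumFinEquiv
    (lexColoring c d) fun a => ?_
  have hsize : Fin.append k l (finSumFinEquiv a) = Sum.elim k l a := by cases a <;> simp
  rw [hsize]
  exact cliqueFree_colorGraph_lexColoring hc hd a

theorem exists_pos_and_ramseyProp (k : Fin r → ℕ) : ∃ N, 0 < N ∧ ramseyProp k N := by
  obtain ⟨N, hN⟩ := exists_forall_card_lt_of_cliqueFreeOn k
  refine ⟨N + 1, N.succ_pos, ramseyProp_iff.mpr fun c => ?_⟩
  by_contra! hfree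
  have hlt := hN _ _ (iSup_colorGraph c) Finset.univ fun i => (hfree i).cliqueFreeOn
  rw [Finset.card_fin] at hlt
  omega

theorem multiRamsey_pos (k : Fin r → ℕ) : 0 < multiRamsey k :=
  (Nat.sInf_mem (exists_pos_and_ramseyProp k)).1

theorem ramseyProp_multiRamsey (k : Fin r → ℕ) : ramseyProp k (multiRamsey k) :=
  (Nat.sInf_mem (exists_pos_and_ramseyProp k)).2

theorem lt_multiRamsey (h : ¬ramseyProp k N) : N < multiRamsey k :=
  lt_of_not_ge fun hle => h (ramseyProp_mono hle (ramseyProp_multiRamsey k))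

theorem not_ramseyProp_of_lt_multiRamsey (hN : N ≠ 0) (h : N < multiRamsey k) : ¬ramseyProp k N :=
  fun hp => Nat.notMem_of_lt_sInf h ⟨Nat.pos_of_ne_zero hN, hp⟩

theorem pred_mul_pred_lt_multiRamsey_append (k : Fin r → ℕ) (l : Fin s → ℕ) :
    (multiRamsey k - 1) * (multiRamsey l - 1) < multiRamsey (Fin.append k l) := by
  obtain hk | hk := eq_or_ne (multiRamsey k - 1) 0
  · simpa only [hk, zero_mul] using multiRamsey_pos _
  obtain hl | hl := eq_or_ne (multiRamsey l - 1) 0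
  · simpa only [hl, mul_zero] using multiRamsey_pos _
  exact lt_multiRamsey <| not_ramseyProp_append
    (not_ramseyProp_of_lt_multiRamsey hk (Nat.pred_lt (multiRamsey_pos k).ne'))
    (not_ramseyProp_of_lt_multiRamsey hl (Nat.pred_lt (multiRamsey_pos l).ne'))

end RamseyNumber

section Diagonal

theorem not_ramseyProp_const_pow (k : ℕ) {r : ℕ} (hr : r ≠ 0) :
    ¬ramseyProp (fun _ : Fin r => k + 1) (k ^ r) := by
  induction r, Nat.one_le_iff_ne_zero.mpr hr using Nat.le_induction with
  | base => exact not_ramseyProp_of_forall_lt fun _ => by simp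
  | succ r hr ih =>
    rw [pow_succ, ← append_const]
    exact not_ramseyProp_append (ih (by omega))
      (not_ramseyProp_of_forall_lt fun _ => k.lt_succ_self)

theorem pow_lt_diagRamsey (k : ℕ) {r : ℕ} (hr : r ≠ 0) : k ^ r < diagRamsey r (k + 1) :=
  lt_multiRamsey (not_ramseyProp_const_pow k hr)

theorem two_le_diagRamsey {k r : ℕ} (hk : 2 ≤ k) (hr : r ≠ 0) : 2 ≤ diagRamsey r k := by
  obtain ⟨m, rfl⟩ := Nat.exists_eq_add_of_le' hk
  exact (Nat.one_le_pow r (m + 1) m.succ_pos).trans_lt (pow_lt_diagRamsey (m + 1) hr)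

end Diagonal

section DecreasingConjecture

theorem DC.multiRamsey_update_le (hDC : DC) {r : ℕ} {k : Fin r → ℕ} (hk : ∀ l, 2 ≤ k l)
    {i j : Fin r} (hij : i ≠ j) (hi : 3 ≤ k i) (hle : k i ≤ k j) :
    multiRamsey (Function.update (Function.update k j (k j + 1)) i (k i - 1)) ≤ multiRamsey k := by
  have hr : 2 ≤ r := by omega
  convert hDC r hr k hk i j hij hi hle using 2
  funext l
  simp only [Function.update_apply]

theorem DC.multiRamsey_append_add_one_le (hDC : DC) {a : ℕ} {k l : Fin a → ℕ} (hk : ∀ i, 2 ≤ k i)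
    (hkl : ∀ i, k i < l i) :
    multiRamsey (Fin.append k (l + 1)) ≤ multiRamsey (Fin.append (k + 1) l) := by
  have htransfer (s : Finset (Fin a)) :
      multiRamsey (Fin.append (s.piecewise k (k + 1)) (s.piecewise (l + 1) l))
        ≤ multiRamsey (Fin.append (k + 1) l) := by
    induction s using Finset.induction_on with
    | empty => simp only [Finset.piecewise_empty, le_refl]
    | insert i s hi ih =>
      refine le_trans ?_ ih
      have hleft : s.piecewise k (k + 1) i = k i + 1 := Finset.piecewise_eq_of_notMem s _ _ hi
      have hright : s.piecewise (l + 1) l i = l i := Finset.piecewise_eq_of_notMem s _ _ hi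
      have hmove := hDC.multiRamsey_update_le
        (k := Fin.append (s.piecewise k (k + 1)) (s.piecewise (l + 1) l))
        (i := Fin.castAdd a i) (j := Fin.natAdd a i)
      simp only [Fin.append_left, Fin.append_right, hleft, hright, Nat.add_sub_cancel] at hmove
      rw [Finset.piecewise_insert, Finset.piecewise_insert, append_update_update]
      refine hmove (fun m => ?_) (castAdd_ne_natAdd i i) (by have := hk i; omega) (hkl i)
      cases m using Fin.addCases with
      | left j =>
        rw [Fin.append_left]
        exact s.piecewise_cases k (k + 1) (2 ≤ ·) (hk j) (Nat.le_add_right_of_le (hk j))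
      | right j =>
        have hlj : 2 ≤ l j := (hk j).trans (hkl j).le
        rw [Fin.append_right]
        exact s.piecewise_cases (l + 1) l (2 ≤ ·) (Nat.le_add_right_of_le hlj) hlj
  simpa only [Finset.piecewise_univ] using htransfer Finset.univ

theorem DC.diagRamsey_mul_le (hDC : DC) {k : ℕ} (hk : 2 ≤ k) {a : ℕ} (ha : a ≠ 0) :
    diagRamsey a k * diagRamsey a (k + 2) ≤ 4 * diagRamsey (a + a) (k + 1) := by
  have hprod : (diagRamsey a k - 1) * (diagRamsey a (k + 2) - 1) < diagRamsey (a + a) (k + 1) :=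
    calc (diagRamsey a k - 1) * (diagRamsey a (k + 2) - 1)
        < multiRamsey (Fin.append (fun _ : Fin a => k) (fun _ : Fin a => k + 2)) :=
          pred_mul_pred_lt_multiRamsey_append _ _
      _ ≤ multiRamsey (Fin.append (fun _ : Fin a => k + 1) (fun _ : Fin a => k + 1)) :=
          hDC.multiRamsey_append_add_one_le (fun _ => hk) (fun _ => k.lt_succ_self)
      _ = diagRamsey (a + a) (k + 1) := by rw [append_const, diagRamsey]
  have hx := two_le_diagRamsey hk ha
  have hy := two_le_diagRamsey (k := k + 2) (by omega) ha
  calc diagRamsey a k * diagRamsey a (k + 2)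
      ≤ (2 * (diagRamsey a k - 1)) * (2 * (diagRamsey a (k + 2) - 1)) := by gcongr <;> omega
    _ = 4 * ((diagRamsey a k - 1) * (diagRamsey a (k + 2) - 1)) := by ring
    _ ≤ 4 * diagRamsey (a + a) (k + 1) := by gcongr

end DecreasingConjecture

section GrowthRate

/-- The root `R_r(k)^{1/r}`, whose limit as `r → ∞` is the growth rate `L_k`. The value at `r = 0`
is `1`, because `1 / 0 = 0`. -/
noncomputable def diagRamseyRoot (k r : ℕ) : ℝ≥0∞ :=
  (diagRamsey r k : ℝ≥0∞) ^ (1 / (r : ℝ))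

theorem natCast_le_diagRamseyRoot (k : ℕ) {r : ℕ} (hr : r ≠ 0) :
    (k : ℝ≥0∞) ≤ diagRamseyRoot (k + 1) r :=
  calc (k : ℝ≥0∞) = ((k ^ r : ℕ) : ℝ≥0∞) ^ (1 / (r : ℝ)) := by
        rw [Nat.cast_pow, one_div, ENNReal.pow_rpow_inv_natCast hr]
    _ ≤ diagRamseyRoot (k + 1) r :=
        ENNReal.rpow_le_rpow (by exact_mod_cast (pow_lt_diagRamsey k hr).le) (by positivity)

theorem diagRamseyRoot_add_self_sq (k r : ℕ) :
    diagRamseyRoot k (r + r) ^ 2 = (diagRamsey (r + r) k : ℝ≥0∞) ^ (1 / (r : ℝ)) := by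
  rw [diagRamseyRoot, ← ENNReal.rpow_natCast, ← ENNReal.rpow_mul]
  congr 1
  push_cast
  rw [← two_mul, one_div_mul_eq_div, div_mul_cancel_left₀ two_ne_zero, one_div]

theorem DC.diagRamseyRoot_mul_le (hDC : DC) {k : ℕ} (hk : 2 ≤ k) {a : ℕ} (ha : a ≠ 0) :
    diagRamseyRoot k a * diagRamseyRoot (k + 2) a
      ≤ 4 ^ (1 / (a : ℝ)) * diagRamseyRoot (k + 1) (a + a) ^ 2 := by
  have hexp : (0 : ℝ) ≤ 1 / a := by positivity
  rw [diagRamseyRoot_add_self_sq, diagRamseyRoot, diagRamseyRoot,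
    ← ENNReal.mul_rpow_of_nonneg _ _ hexp, ← ENNReal.mul_rpow_of_nonneg _ _ hexp]
  exact ENNReal.rpow_le_rpow (by exact_mod_cast hDC.diagRamsey_mul_le hk ha) hexp

theorem natCast_le_of_tendsto_diagRamseyRoot {k : ℕ} {x : ℝ≥0∞}
    (hx : Tendsto (diagRamseyRoot (k + 1)) atTop (𝓝 x)) : (k : ℝ≥0∞) ≤ x :=
  ge_of_tendsto hx <| (eventually_ne_atTop 0).mono fun _ hr => natCast_le_diagRamseyRoot k hr

theorem ne_zero_of_tendsto_diagRamseyRoot {k : ℕ} (hk : 2 ≤ k) {x : ℝ≥0∞}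
    (hx : Tendsto (diagRamseyRoot k) atTop (𝓝 x)) : x ≠ 0 := by
  obtain ⟨m, rfl⟩ := Nat.exists_eq_add_of_le' hk
  have hpos : (0 : ℝ≥0∞) < (m + 1 : ℕ) := by exact_mod_cast m.succ_pos
  exact (hpos.trans_le (natCast_le_of_tendsto_diagRamseyRoot hx)).ne'

theorem tendsto_const_rpow_one_div_nat {c : ℝ≥0∞} (h0 : c ≠ 0) (htop : c ≠ ⊤) :
    Tendsto (fun n : ℕ => c ^ (1 / (n : ℝ))) atTop (𝓝 1) := by
  lift c to NNReal using htop
  have hc : c ≠ 0 := by exact_mod_cast h0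
  have hlim : Tendsto (fun n : ℕ => c ^ (1 / (n : ℝ))) atTop (𝓝 (c ^ (0 : ℝ))) :=
    tendsto_const_nhds.nnrpow tendsto_one_div_atTop_nhds_zero_nat (Or.inl hc)
  rw [NNReal.rpow_zero] at hlim
  simpa only [ENNReal.coe_rpow_of_ne_zero hc, ENNReal.coe_one] using ENNReal.tendsto_coe.mpr hlim

theorem DC.mul_le_sq_of_tendsto (hDC : DC) {k : ℕ} (hk : 2 ≤ k) {x y z : ℝ≥0∞}
    (hx : Tendsto (diagRamseyRoot k) atTop (𝓝 x))
    (hy : Tendsto (diagRamseyRoot (k + 1)) atTop (𝓝 y))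
    (hz : Tendsto (diagRamseyRoot (k + 2)) atTop (𝓝 z)) : x * z ≤ y ^ 2 := by
  have hx0 := ne_zero_of_tendsto_diagRamseyRoot hk hx
  have hz0 := ne_zero_of_tendsto_diagRamseyRoot (by omega) hz
  have hleft : Tendsto (fun a => diagRamseyRoot k a * diagRamseyRoot (k + 2) a) atTop (𝓝 (x * z)) :=
    ENNReal.Tendsto.mul hx (Or.inl hx0) hz (Or.inl hz0)
  have hdouble : Tendsto (fun a : ℕ => a + a) atTop atTop := tendsto_id.atTop_add_atTop tendsto_id
  have hsq : Tendsto (fun a => diagRamseyRoot (k + 1) (a + a) ^ 2) atTop (𝓝 (y ^ 2)) :=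
    ENNReal.Tendsto.pow (hy.comp hdouble)
  have hfour := tendsto_const_rpow_one_div_nat (c := 4) (by norm_num) (by norm_num)
  have hright := ENNReal.Tendsto.mul hfour (Or.inl one_ne_zero) hsq (Or.inr ENNReal.one_ne_top)
  rw [one_mul] at hright
  exact le_of_tendsto_of_tendsto hleft hright <|
    (eventually_ne_atTop 0).mono fun a ha => hDC.diagRamseyRoot_mul_le hk ha

end GrowthRate

/-- Log-concavity of a sequence of extended nonnegative reals, written without quotients so that no
convention on dividing by `0` or `∞` intervenes. -/
def IsLogConcave (u : ℕ → ℝ≥0∞) : Prop :=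
  ∀ n, u n * u (n + 2) ≤ u (n + 1) ^ 2

namespace IsLogConcave

variable {u : ℕ → ℝ≥0∞}

theorem comp_add (h : IsLogConcave u) (m : ℕ) : IsLogConcave fun n => u (n + m) := fun n => by
  simpa only [Nat.add_right_comm] using h (n + m)

theorem succ_ne_top (h : IsLogConcave u) (h0 : ∀ n, u n ≠ 0) (h1 : u 1 ≠ ⊤) (n : ℕ) :
    u (n + 1) ≠ ⊤ := by
  induction n with
  | zero => exact h1
  | succ n ih =>
    intro htop
    have hle := h n
    rw [htop, ENNReal.mul_top (h0 n)] at hle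
    exact ENNReal.pow_ne_top ih (top_le_iff.mp hle)

theorem antitone (h : IsLogConcave u) (h0 : ∀ n, u n ≠ 0) (hfin : ∀ n, u n ≠ ⊤) (h10 : u 1 ≤ u 0) :
    Antitone u := by
  refine antitone_nat_of_succ_le fun n => ?_
  induction n with
  | zero => exact h10
  | succ n ih =>
    refine (ENNReal.mul_le_mul_iff_right (h0 n) (hfin n)).mp ?_
    calc u n * u (n + 2) ≤ u (n + 1) ^ 2 := h n
      _ = u (n + 1) * u (n + 1) := sq _
      _ ≤ u n * u (n + 1) := by gcongr

theorem strictMono (h : IsLogConcave u) (h0 : ∀ n, u n ≠ 0) (hfin : ∀ n, u n ≠ ⊤)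
    (htop : Tendsto u atTop (𝓝 ⊤)) : StrictMono u := by
  refine strictMono_nat_of_lt_succ fun n => ?_
  by_contra! hle
  have hanti : Antitone fun j => u (j + n) :=
    (h.comp_add n).antitone (fun j => h0 _) (fun j => hfin _)
      (by simpa only [zero_add, add_comm 1 n] using hle)
  have hbound := hanti.le_of_tendsto ((tendsto_add_atTop_iff_nat n).mpr htop) 0
  exact hfin _ (top_le_iff.mp hbound)

end IsLogConcave

/-- if DC holds and `L_3` is finite, then `L_k < L_{k+1}` for every
`k ≥ 3`, where `L j` is the limit of `r ↦ R_r(j)^{1/r}` in `[0, ∞]`. -/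
theorem stmt14 (hDC : DC) (L : ℕ → ℝ≥0∞)
    (hL : ∀ j, 2 ≤ j →
      Tendsto (fun r : ℕ => ((diagRamsey r j : ℝ≥0∞)) ^ (1 / (r : ℝ))) atTop (𝓝 (L j)))
    (h3 : L 3 ≠ ⊤) :
    ∀ k, 3 ≤ k → L k < L (k + 1) := by
  have hconc : IsLogConcave fun n => L (n + 2) := fun n =>
    hDC.mul_le_sq_of_tendsto (by omega) (hL _ (by omega)) (hL _ (by omega)) (hL _ (by omega))
  have hpos (n : ℕ) : L (n + 2) ≠ 0 :=
    ne_zero_of_tendsto_diagRamseyRoot (by omega) (hL _ (by omega))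
  have hfin (n : ℕ) : L (n + 3) ≠ ⊤ := hconc.succ_ne_top hpos h3 n
  have hlower (n : ℕ) : ((n + 2 : ℕ) : ℝ≥0∞) ≤ L (n + 3) :=
    natCast_le_of_tendsto_diagRamseyRoot (hL _ (by omega))
  have htop : Tendsto (fun n => L (n + 3)) atTop (𝓝 ⊤) :=
    tendsto_nhds_top_mono' ((tendsto_add_atTop_iff_nat 2).mpr ENNReal.tendsto_nat_nhds_top) hlower
  have hmono : StrictMono fun n => L (n + 3) :=
    (hconc.comp_add 1).strictMono (fun n => hpos (n + 1)) hfin htop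
  intro k hk
  obtain ⟨n, rfl⟩ := Nat.exists_eq_add_of_le' hk
  exact hmono n.lt_succ_self
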